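/- Let β > 0, h > 0, t_j = jh, and define A²ₙ₊₁ⁿ = ∫_{t_n}^{t_{n+1}} ((s − t_{n−1})(s − t_n)/(2h²)) exp(−β(t_{n+1} − s)) ds. There exists an absolute constant C > 0 such that whenever 0 < βh ≤ 1, |(1 − β A²ₙ₊₁ⁿ) − (1 − (5/12) βh + (1/8) β²h²)| ≤ C (βh)³. -/

import Mathlib

open Real MeasureTheory

/-!
For `y ≥ 0` the kernel satisfies `|exp (-y) - (1 - y)| ≤ y² / 2`. Integrating this with
`y = β (tₙ₊₁ - s)` against the nonnegative weight `Qⁿₙ₊₁` bounds the error of the first order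
expansion of `A²ₙ₊₁ⁿ` by half of a second moment. The moments of order `0`, `1`, `2` of `Qⁿₙ₊₁`
about `tₙ₊₁` are `5h/12`, `h²/8` and `7h³/120`, whence the constant `C = 7/240`.
-/

lemma abs_exp_neg_sub_one_sub_le {y : ℝ} (hy : 0 ≤ y) : |exp (-y) - (1 - y)| ≤ y ^ 2 / 2 := by
  have lower : 1 - y ≤ exp (-y) := one_sub_le_exp_neg y
  have upper : exp (-y) ≤ 1 - y + y ^ 2 / 2 := by
    have factor_nonneg : 0 ≤ 1 - y + y ^ 2 / 2 := by nlinarith [sq_nonneg (y - 1)]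
    rw [exp_neg, inv_le_iff_one_le_mul₀ (exp_pos y)]
    calc (1 : ℝ) ≤ 1 + y ^ 4 / 4 := le_add_of_nonneg_right (by positivity)
      _ = (1 - y + y ^ 2 / 2) * (1 + y + y ^ 2 / 2) := by ring
      _ ≤ (1 - y + y ^ 2 / 2) * exp y := by gcongr; exact quadratic_le_exp_of_nonneg hy
  rw [abs_le]
  constructor <;> linarith [sq_nonneg y]

lemma abs_integral_mul_exp_neg_sub_le {μ : Measure ℝ} {a b : ℝ} {w φ : ℝ → ℝ} (hab : a ≤ b)
    (hw : IntervalIntegrable w μ a b) (hw_nonneg : ∀ s ∈ Set.Ioc a b, 0 ≤ w s)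
    (hφ : ContinuousOn φ (Set.uIcc a b)) (hφ_nonneg : ∀ s ∈ Set.Ioc a b, 0 ≤ φ s) :
    |(∫ s in a..b, w s * exp (-φ s) ∂μ) - ((∫ s in a..b, w s ∂μ) - ∫ s in a..b, w s * φ s ∂μ)|
      ≤ (∫ s in a..b, w s * φ s ^ 2 ∂μ) / 2 := by
  have hwφ := hw.mul_continuousOn hφ
  have hwφ_sq : IntervalIntegrable (fun s ↦ w s * φ s ^ 2) μ a b := hw.mul_continuousOn (hφ.pow 2)
  have hw_exp : IntervalIntegrable (fun s ↦ w s * exp (-φ s)) μ a b :=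
    hw.mul_continuousOn hφ.neg.rexp
  have pointwise : ∀ s ∈ Set.Ioc a b,
      ‖w s * exp (-φ s) - (w s - w s * φ s)‖ ≤ w s * φ s ^ 2 / 2 := fun s hs ↦
    calc ‖w s * exp (-φ s) - (w s - w s * φ s)‖
        = w s * |exp (-φ s) - (1 - φ s)| := by
          rw [← mul_one_sub, ← mul_sub, norm_mul, norm_of_nonneg (hw_nonneg s hs), norm_eq_abs]
      _ ≤ w s * (φ s ^ 2 / 2) := mul_le_mul_of_nonneg_left
          (abs_exp_neg_sub_one_sub_le (hφ_nonneg s hs)) (hw_nonneg s hs)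
      _ = w s * φ s ^ 2 / 2 := by ring
  rw [← intervalIntegral.integral_sub hw hwφ,
    ← intervalIntegral.integral_sub hw_exp (hw.sub hwφ), ← intervalIntegral.integral_div]
  exact intervalIntegral.norm_integral_le_of_norm_le hab (.of_forall pointwise)
    (hwφ_sq.div_const 2)

/-- The quadratic Lagrange basis polynomial `Qⁿₙ₊₁` on the nodes `(n - 1) h`, `n h`, `(n + 1) h`,
equal to `1` at the last one. The index `n` is real, since only differences of nodes matter. -/
noncomputable def diagonalBasis (h n s : ℝ) : ℝ :=
  (s - (n - 1) * h) * (s - n * h) / (2 * h ^ 2)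

/-- The diagonal weight `A²ₙ₊₁ⁿ` of the scheme, for step size `h` and decay rate `β`. -/
noncomputable def diagonalWeight (β h n : ℝ) : ℝ :=
  ∫ s in (n * h)..((n + 1) * h), diagonalBasis h n s * exp (-β * ((n + 1) * h - s))

@[fun_prop]
lemma continuous_diagonalBasis (h n : ℝ) : Continuous (diagonalBasis h n) := by
  unfold diagonalBasis
  fun_prop

lemma diagonalBasis_nonneg {h n s : ℝ} (hh : 0 ≤ h) (hs : n * h ≤ s) :
    0 ≤ diagonalBasis h n s :=
  div_nonneg (mul_nonneg (by linarith) (by linarith)) (by positivity)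

lemma diagonalBasis_endpoint_sub_mul {h : ℝ} (hh : h ≠ 0) (n v : ℝ) :
    diagonalBasis h n ((n + 1) * h - h * v) = 1 - 3 / 2 * v + v ^ 2 / 2 := by
  unfold diagonalBasis
  field_simp
  ring

lemma integral_diagonalBasis_mul_pow {h : ℝ} (hh : h ≠ 0) (β n : ℝ) (k : ℕ) :
    ∫ s in (n * h)..((n + 1) * h), diagonalBasis h n s * (β * ((n + 1) * h - s)) ^ k
      = h * (β * h) ^ k * (1 / (k + 1) - 3 / (2 * (k + 2)) + 1 / (2 * (k + 3))) := by
  have rescale := intervalIntegral.mul_integral_comp_sub_mul (a := 0) (b := 1)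
    (f := fun s ↦ diagonalBasis h n s * (β * ((n + 1) * h - s)) ^ k) h ((n + 1) * h)
  have left_node : (n + 1) * h - h * 1 = n * h := by ring
  have integrand (v : ℝ) : diagonalBasis h n ((n + 1) * h - h * v)
        * (β * ((n + 1) * h - ((n + 1) * h - h * v))) ^ k
      = (β * h) ^ k * (v ^ k - 3 / 2 * v ^ (k + 1) + 1 / 2 * v ^ (k + 2)) := by
    rw [diagonalBasis_endpoint_sub_mul hh, sub_sub_cancel, ← mul_assoc, mul_pow]
    ring
  have moment : ∫ v in (0 : ℝ)..1, (v ^ k - 3 / 2 * v ^ (k + 1) + 1 / 2 * v ^ (k + 2))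
      = 1 / (k + 1) - 3 / (2 * (k + 2)) + 1 / (2 * (k + 3)) := by
    rw [intervalIntegral.integral_add (Continuous.intervalIntegrable (by fun_prop) _ _)
        (Continuous.intervalIntegrable (by fun_prop) _ _),
      intervalIntegral.integral_sub (Continuous.intervalIntegrable (by fun_prop) _ _)
        (Continuous.intervalIntegrable (by fun_prop) _ _)]
    simp only [intervalIntegral.integral_const_mul, integral_pow, one_pow, ne_eq,
      Nat.add_eq_zero_iff, one_ne_zero, and_false, not_false_eq_true, zero_pow, sub_zero]
    push_cast
    field_simp
    ring
  rw [left_node, mul_zero, sub_zero] at rescale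
  simp only [← rescale, integrand, intervalIntegral.integral_const_mul, moment, mul_assoc]

lemma abs_diagonalWeight_sub_le {β h : ℝ} (hβ : 0 ≤ β) (hh : 0 < h) (n : ℝ) :
    |diagonalWeight β h n - h * (5 / 12 - β * h / 8)| ≤ 7 / 240 * h * (β * h) ^ 2 := by
  have expansion := abs_integral_mul_exp_neg_sub_le (μ := volume)
    (a := n * h) (b := (n + 1) * h) (w := diagonalBasis h n) (φ := fun s ↦ β * ((n + 1) * h - s))
    (by linarith) ((continuous_diagonalBasis h n).intervalIntegrable _ _)
    (fun s hs ↦ diagonalBasis_nonneg hh.le hs.1.le) (by fun_prop)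
    (fun s hs ↦ mul_nonneg hβ (sub_nonneg.2 hs.2))
  have moment := integral_diagonalBasis_mul_pow hh.ne' β n
  have moment_zero := moment 0
  have moment_one := moment 1
  simp only [pow_zero, pow_one, mul_one] at moment_zero moment_one
  rw [moment_zero, moment_one, moment 2] at expansion
  simp only [← neg_mul] at expansion
  convert expansion using 1
  · rw [diagonalWeight]
    push_cast
    ring_nf
  · push_cast
    ring

theorem quadratic_scheme_diagonal_weight_expansion_general {β h : ℝ} (hβ : 0 ≤ β) (hh : 0 < h)
    (n : ℝ) :
    |(1 - β * diagonalWeight β h n) - (1 - 5 / 12 * β * h + 1 / 8 * β ^ 2 * h ^ 2)|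
      ≤ 7 / 240 * (β * h) ^ 3 :=
  calc |(1 - β * diagonalWeight β h n) - (1 - 5 / 12 * β * h + 1 / 8 * β ^ 2 * h ^ 2)|
      = |β * (diagonalWeight β h n - h * (5 / 12 - β * h / 8))| := by
        rw [← abs_neg]
        ring_nf
    _ = β * |diagonalWeight β h n - h * (5 / 12 - β * h / 8)| := by
        rw [abs_mul, abs_of_nonneg hβ]
    _ ≤ β * (7 / 240 * h * (β * h) ^ 2) := by
        gcongr
        exact abs_diagonalWeight_sub_le hβ hh n
    _ = 7 / 240 * (β * h) ^ 3 := by ring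

/-- Expansion of the diagonal weight of the quadratic-interpolation scheme:
`1 - β A²ₙ₊₁ⁿ = 1 - (5/12)βh + (1/8)β²h² + O((βh)³)` uniformly for `0 < βh ≤ 1`. -/
theorem quadratic_scheme_diagonal_weight_expansion :
    ∃ C > (0 : ℝ), ∀ β h : ℝ, 0 < β → 0 < h → β * h ≤ 1 → ∀ n : ℕ, 1 ≤ n →
      |(1 - β * ∫ s in ((n : ℝ) * h)..(((n : ℝ) + 1) * h),
            ((s - ((n : ℝ) - 1) * h) * (s - (n : ℝ) * h) / (2 * h ^ 2))
              * Real.exp (-β * (((n : ℝ) + 1) * h - s)))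
          - (1 - 5 / 12 * β * h + 1 / 8 * β ^ 2 * h ^ 2)| ≤ C * (β * h) ^ 3 :=
  ⟨7 / 240, by norm_num, fun _ _ hβ hh _ n _ ↦
    quadratic_scheme_diagonal_weight_expansion_general hβ.le hh n⟩
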